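/- Let G be a finite group possessing a Sylow tower and let χ be an irreducible complex character of G. Then the number of elements x ∈ G such that χ(x) = 0 or χ(x) is a root of unity is at least |G|/2. -/

import Mathlib

open CategoryTheory

/-- A finite group `G` has a Sylow tower if there are distinct primes `p 0, …, p (k-1)` and a
chain `⊥ = N 0 ≤ N 1 ≤ … ≤ N k = ⊤` of normal subgroups of `G` such that for each `i`
the index `|N (i+1) : N i|` equals the `p i`-part of `|G|`. -/
def HasSylowTower (G : Type*) [Group G] [Fintype G] : Prop :=
  ∃ (k : ℕ) (p : Fin k → ℕ) (N : Fin (k + 1) → Subgroup G),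
    (∀ i, (p i).Prime) ∧ Function.Injective p ∧
    Monotone N ∧ N 0 = ⊥ ∧ N (Fin.last k) = ⊤ ∧
    (∀ i, (N i).Normal) ∧
    ∀ i : Fin k,
      (N i.castSucc).relIndex (N i.succ) = p i ^ (Fintype.card G).factorization (p i)

/-- Embeddings of a countable field into uncountable algebraically closed fields of the same
cardinality extend. -/
theorem tow_ext_hom {K L M : Type} [Field K] [Field L] [Field M] [Algebra K L] [Algebra K M]
    [IsAlgClosed L] [IsAlgClosed M] (hK : Cardinal.mk K ≤ Cardinal.aleph0)
    (hL : Cardinal.aleph0 < Cardinal.mk L) (hLM : Cardinal.mk L = Cardinal.mk M) :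
    ∃ σ : L →+* M, ∀ x : K, σ (algebraMap K L x) = algebraMap K M x := by
  obtain ⟨s, hs⟩ := exists_isTranscendenceBasis K L
  obtain ⟨t, ht⟩ := exists_isTranscendenceBasis K M
  have h1 := IsAlgClosed.cardinal_eq_cardinal_transcendence_basis_of_aleph0_lt' _ hs hK hL
  have h2 := IsAlgClosed.cardinal_eq_cardinal_transcendence_basis_of_aleph0_lt' _ ht hK (hLM ▸ hL)
  obtain ⟨e⟩ := Cardinal.eq.1 (h1.symm.trans (hLM.trans h2))
  have hinj := ht.1.comp e e.injective
  let g : Algebra.adjoin K (Set.range ((↑) : s → L)) →ₐ[K] M :=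
    (MvPolynomial.aeval (((↑) : t → M) ∘ e)).comp hs.1.aevalEquiv.symm.toAlgHom
  have hg : Function.Injective g := by
    have : Function.Injective (MvPolynomial.aeval (R := K) (((↑) : t → M) ∘ e)) := hinj
    exact this.comp hs.1.aevalEquiv.symm.injective
  let : Algebra (Algebra.adjoin K (Set.range ((↑) : s → L))) M := g.toRingHom.toAlgebra
  have : FaithfulSMul (Algebra.adjoin K (Set.range ((↑) : s → L))) M :=
    (faithfulSMul_iff_algebraMap_injective _ _).2 hg
  have : Algebra.IsAlgebraic (Algebra.adjoin K (Set.range ((↑) : s → L))) L := hs.isAlgebraic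
  let σ : L →ₐ[Algebra.adjoin K (Set.range ((↑) : s → L))] M := IsAlgClosed.lift
  refine ⟨σ.toRingHom, fun x => ?_⟩
  have := σ.commutes (algebraMap K _ x)
  have h3 : g (algebraMap K _ x) = algebraMap K M x := g.commutes x
  rw [← h3]
  exact this

theorem tow_kron {z : ℂ} (hz : IsIntegral ℤ z) (h0 : z ≠ 0)
    (h : ∀ σ : ℂ →+* ℂ, ‖σ z‖ ≤ 1) : ∃ m : ℕ, 0 < m ∧ z ^ m = 1 := by
  have hzQ : IsIntegral ℚ z := hz.tower_top
  let K := IntermediateField.adjoin ℚ {z}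
  let : NumberField K := {
    to_charZero := K.charZero,
    to_finiteDimensional := IntermediateField.adjoin.finiteDimensional hzQ }
  let y : K := ⟨z, IntermediateField.mem_adjoin_simple_self ℚ z⟩
  suffices ∃ (n : ℕ) (_ : 0 < n), y ^ n = 1 by
    obtain ⟨n, hn₀, hn₁⟩ := this
    exact ⟨n, hn₀, congrArg (algebraMap K ℂ) hn₁⟩
  refine NumberField.Embeddings.pow_eq_one_of_norm_le_one (x := y) K ℂ
    (Subtype.coe_ne_coe.mp h0) (IntermediateField.coe_isIntegral_iff.mp hz) fun φ ↦ ?_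
  have hK : Cardinal.mk K ≤ Cardinal.aleph0 := by
    have := Algebra.IsAlgebraic.cardinalMk_le_max ℚ K
    simpa using this
  have hC : Cardinal.aleph0 < Cardinal.mk ℂ := by
    rw [Cardinal.mk_complex]; exact Cardinal.aleph0_lt_continuum
  obtain ⟨σ, hσ⟩ := @tow_ext_hom K ℂ ℂ _ _ _ _ φ.toAlgebra _ _ hK hC rfl
  have := hσ y
  have h2 : σ z = φ y := this
  rw [← h2]
  exact h σ

theorem tow_trace_integral {n : Type*} [Fintype n] [DecidableEq n] (X : Matrix n n ℂ) (k : ℕ)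
    (hk : 0 < k) (hX : X ^ (k + 1) = X) : IsIntegral ℤ X.trace := by
  rw [Matrix.trace_eq_sum_roots_charpoly]
  refine Multiset.sum_induction (IsIntegral ℤ) _ (fun a b ha hb => ha.add hb) isIntegral_zero ?_
  intro r hr
  have hr' : r ∈ spectrum ℂ X := by
    rw [Matrix.mem_spectrum_iff_isRoot_charpoly]
    exact Polynomial.isRoot_of_mem_roots hr
  have h1 := spectrum.subset_polynomial_aeval X (Polynomial.X ^ (k+1) - Polynomial.X)
    (Set.mem_image_of_mem _ hr')
  have hne : Nonempty n := by
    by_contra hne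
    rw [not_nonempty_iff] at hne
    have : Subsingleton (Matrix n n ℂ) := inferInstance
    simp [spectrum.of_subsingleton] at hr'
  simp only [map_sub, map_pow, Polynomial.aeval_X, hX, sub_self, spectrum.zero_eq] at h1
  simp at h1
  refine ⟨Polynomial.X ^ (k+1) - Polynomial.X, ?_, ?_⟩
  · exact Polynomial.monic_X_pow_sub (by rw [Polynomial.degree_X]; exact_mod_cast (by omega))
  · simpa using h1

open scoped ComplexOrder in
theorem tow_trace_inv {G : Type*} [Group G] [Fintype G] {n : Type*} [Fintype n] [DecidableEq n]
    (R : G →* Matrix n n ℂ) (x : G) : (R x⁻¹).trace = star (R x).trace := by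
  let H : Matrix n n ℂ := ∑ g : G, (R g).conjTranspose * R g
  have hH : H.PosDef := by
    classical
    have : H = 1 + ∑ g ∈ Finset.univ.erase (1:G), (R g).conjTranspose * R g := by
      simp only [H]; rw [← Finset.add_sum_erase _ _ (Finset.mem_univ (1:G))]; simp
    rw [this]
    refine Matrix.PosDef.one.add_posSemidef ?_
    exact Matrix.posSemidef_sum _ fun i _ => Matrix.posSemidef_conjTranspose_mul_self _
  have h1 : (R x).conjTranspose * H * R x = H := by
    simp only [H, Finset.mul_sum, Finset.sum_mul]
    refine Fintype.sum_equiv (Equiv.mulRight x) _ _ fun g => ?_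
    simp [Matrix.conjTranspose_mul, Matrix.mul_assoc]
  have hu : IsUnit H.det := (Matrix.isUnit_iff_isUnit_det _).1 hH.isUnit
  have h2 : (R x).conjTranspose = H * R x⁻¹ * H⁻¹ := by
    have : R x * R x⁻¹ = 1 := by rw [← map_mul]; simp
    calc (R x).conjTranspose = (R x).conjTranspose * H * H⁻¹ := by
          rw [Matrix.mul_assoc, Matrix.mul_nonsing_inv _ hu, Matrix.mul_one]
      _ = (R x).conjTranspose * H * (R x * R x⁻¹) * H⁻¹ := by rw [this]; simp
      _ = ((R x).conjTranspose * H * R x) * R x⁻¹ * H⁻¹ := by simp only [Matrix.mul_assoc]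
      _ = _ := by rw [h1]
  rw [← Matrix.trace_conjTranspose, h2, Matrix.trace_mul_cycle, Matrix.nonsing_inv_mul _ hu, Matrix.one_mul]


/-- The function `χ(x) χ(x⁻¹)` of a matrix representation. -/
noncomputable def towH {G : Type*} [Group G] {n : Type*} [Fintype n] [DecidableEq n]
    (R : G →* Matrix n n ℂ) (x : G) : ℂ := (R x).trace * (R x⁻¹).trace

/-- The average of `f` over the coset `y N`. -/
noncomputable def towAv {G : Type*} [Group G] [Fintype G] {k : Type*} [Field k]
    (N : Subgroup G) (f : G → k) (y : G) : k :=
  open scoped Classical in (Nat.card N : k)⁻¹ * ∑ n ∈ Finset.univ.filter (· ∈ N), f (y * n)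

/-- The Fourier coefficient of `towH R` on the coset `y N`. -/
noncomputable def towC {G : Type*} [Group G] [Fintype G] {n : Type*} [Fintype n] [DecidableEq n]
    (R : G →* Matrix n n ℂ) (N : Subgroup G) (l : N →* ℂ) (y : G) : ℂ :=
  open scoped Classical in (Nat.card N : ℂ)⁻¹ * ∑ m : N, towH R (y * m) * l m⁻¹

set_option linter.unusedSectionVars false
section
variable {G : Type*} [Group G] [Fintype G] {n : Type*} [Fintype n] [DecidableEq n]
    (R : G →* Matrix n n ℂ)

theorem towAv_eq {k : Type*} [Field k] (N : Subgroup G) [Fintype N] (f : G → k) (y : G) :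
    towAv N f y = (Nat.card N : k)⁻¹ * ∑ m : N, f (y * m) := by
  classical
  unfold towAv
  congr 1
  exact Finset.sum_subtype _ (by simp) _

theorem towH_eq (x : G) : towH R x = ((‖(R x).trace‖ ^ 2 : ℝ) : ℂ) := by
  unfold towH
  rw [tow_trace_inv]
  simpa using Complex.mul_conj' ((R x).trace)

/-- Galois conjugate of a matrix representation. -/
noncomputable def towS (σ : ℂ →+* ℂ) : G →* Matrix n n ℂ :=
  (σ.mapMatrix (m := n)).toMonoidHom.comp R

theorem towS_trace (σ : ℂ →+* ℂ) (x : G) : (towS R σ x).trace = σ (R x).trace := by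
  simp [towS, Matrix.trace]

theorem towH_S (σ : ℂ →+* ℂ) (x : G) : towH (towS R σ) x = σ (towH R x) := by
  simp [towH, towS_trace]

theorem towC_S (σ : ℂ →+* ℂ) (N : Subgroup G) (l : N →* ℂ) (y : G) :
    towC (towS R σ) N (σ.toMonoidHom.comp l) y = σ (towC R N l y) := by
  simp [towC, towH_S]

theorem towAv_S (σ : ℂ →+* ℂ) (N : Subgroup G) (y : G) :
    towAv N (towH (towS R σ)) y = σ (towAv N (towH R) y) := by
  simp [towAv, towH_S]

theorem towH_conj (x g : G) : towH R (g * x * g⁻¹) = towH R x := by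
  have h : ∀ z : G, (R (g * z * g⁻¹)).trace = (R z).trace := by
    intro z
    rw [map_mul, map_mul, Matrix.trace_mul_cycle, ← map_mul]
    simp
  unfold towH
  rw [h, show (g * x * g⁻¹)⁻¹ = g * x⁻¹ * g⁻¹ by group, h]

/-- The representation on endomorphisms. -/
noncomputable def towD : G →* Matrix (n × n) (n × n) ℂ where
  toFun x := Matrix.kronecker (R x) (R x⁻¹).transpose
  map_one' := by simp
  map_mul' x y := by
    rw [mul_inv_rev, map_mul, map_mul, Matrix.transpose_mul]
    exact Matrix.mul_kronecker_mul _ _ _ _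

theorem towD_trace (x : G) : (towD R x).trace = towH R x := by
  simp only [towD, towH]
  exact (Matrix.trace_kronecker _ _).trans (by rw [Matrix.trace_transpose])

theorem towC_integral (N : Subgroup G) [hN : N.Normal] (l : N →* ℂ) (y : G) :
    IsIntegral ℤ (towC R N l y) := by
  classical
  have hl1 : ∀ m : N, l m * l m⁻¹ = 1 := fun m => by rw [← map_mul]; simp
  have hl0 : ∀ m : N, l m ≠ 0 := fun m h => by have := hl1 m; simp [h] at this
  by_cases hinv : ∀ m : N, l (MulAut.conjNormal y m) = l m
  · let P : Matrix (n × n) (n × n) ℂ :=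
      (Nat.card N : ℂ)⁻¹ • ∑ m : N, l m⁻¹ • towD R m
    have hDP : ∀ a : N, towD R a * P = l a • P := by
      intro a
      simp only [P, Matrix.mul_smul, Finset.mul_sum]
      rw [smul_comm]
      congr 1
      rw [Finset.smul_sum]
      refine Fintype.sum_equiv (Equiv.mulLeft a) _ _ fun m => ?_
      rw [← map_mul, smul_smul]
      simp only [Equiv.coe_mulLeft, mul_inv_rev, map_mul, Subgroup.coe_mul]
      rw [mul_comm (l m⁻¹), ← mul_assoc, hl1, one_mul]
    have hPP : P * P = P := by
      conv_lhs => enter [1]; simp only [P]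
      rw [Matrix.smul_mul, Finset.sum_mul]
      have : ∀ m : N, (l m⁻¹ • towD R m) * P = P := by
        intro m
        rw [Matrix.smul_mul, hDP, smul_smul, mul_comm, hl1, one_smul]
      simp only [this]
      simp only [Finset.sum_const, Finset.card_univ, Nat.card_eq_fintype_card]
      rw [← Nat.cast_smul_eq_nsmul ℂ, smul_smul, inv_mul_cancel₀, one_smul]
      simp
    have hcomm : Commute (towD R y) P := by
      unfold Commute SemiconjBy
      simp only [P, Matrix.mul_smul, Matrix.smul_mul, Finset.mul_sum, Finset.sum_mul]
      congr 1
      refine Fintype.sum_equiv (MulAut.conjNormal y).toEquiv _ _ fun m => ?_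
      have h1 : l ((MulAut.conjNormal y) m)⁻¹ = l m⁻¹ := by rw [← map_inv, hinv]
      simp only [MulEquiv.toEquiv_eq_coe, MulEquiv.coe_toEquiv, h1]
      rw [← map_mul, ← map_mul]
      simp
    have hX : (towD R y * P) ^ (orderOf y + 1) = towD R y * P := by
      rw [hcomm.mul_pow, ← map_pow, pow_succ y, pow_orderOf_eq_one, one_mul]
      congr 1
      exact IsIdempotentElem.pow_succ_eq _ hPP
    have := tow_trace_integral _ _ (orderOf_pos y) hX
    convert this using 1
    simp only [P, Matrix.mul_smul, Finset.mul_sum, Matrix.trace_smul, Matrix.trace_sum, towC,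
      ← map_mul, towD_trace, smul_eq_mul]
    simp only [mul_comm]
  · push Not at hinv
    obtain ⟨m0, hm0⟩ := hinv
    have : towC R N l y = 0 := by
      have key : (l (MulAut.conjNormal y m0)) * towC R N l y = l m0 * towC R N l y := by
        unfold towC
        rw [mul_left_comm, mul_left_comm (l m0)]
        congr 1
        rw [Finset.mul_sum, Finset.mul_sum]
        refine Fintype.sum_equiv
          ((Equiv.mulLeft m0).trans (Equiv.mulRight (MulAut.conjNormal y m0)⁻¹)) _ _ fun m => ?_
        have h1 : towH R (y * ((m0 * m * (MulAut.conjNormal y m0)⁻¹ : N) : G)) = towH R (y * m) := by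
          rw [← towH_conj R (y * m) (MulAut.conjNormal y m0 : N)]
          congr 1
          simp [mul_assoc]
        simp only [Equiv.trans_apply, Equiv.coe_mulLeft, Equiv.coe_mulRight, h1, mul_inv_rev,
          map_mul, inv_inv]
        linear_combination (-(l (MulAut.conjNormal y m0) * towH R (y * m) * l m⁻¹)) * hl1 m0
      by_contra h
      exact hm0 (mul_right_cancel₀ h key)
    rw [this]; exact isIntegral_zero
end

set_option linter.unusedSectionVars false
section
variable {G : Type*} [Group G] [Fintype G] {n : Type*} [Fintype n] [DecidableEq n]
    (R : G →* Matrix n n ℂ)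

theorem tow_norm_char (N : Subgroup G) (l : N →* ℂ) (m : N) : ‖l m‖ = 1 := by
  have h : (l m) ^ Nat.card N = 1 := by rw [← map_pow, pow_card_eq_one', map_one]
  exact Complex.norm_eq_one_of_pow_eq_one h Nat.card_pos.ne'

/-- real-valued form of the hypothesis -/
theorem towAv_real (N : Subgroup G) (y : G) :
    towAv N (towH R) y = ((towAv N (fun x => ‖(R x).trace‖ ^ 2) y : ℝ) : ℂ) := by
  simp [towAv, towH_eq]

theorem towC_norm_le (N : Subgroup G) (l : N →* ℂ) (y : G)
    (h : towAv N (towH R) y = 1) : ‖towC R N l y‖ ≤ 1 := by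
  classical
  rw [towAv_real, towAv_eq] at h
  have h : (Nat.card N : ℝ)⁻¹ * ∑ m : N, ‖(R (y * m)).trace‖ ^ 2 = 1 := by exact_mod_cast h
  rw [← h]
  unfold towC
  rw [norm_mul]
  simp only [norm_inv, Complex.norm_natCast]
  gcongr
  refine (norm_sum_le _ _).trans (Finset.sum_le_sum fun m _ => ?_)
  rw [norm_mul, tow_norm_char, towH_eq, mul_one, Complex.norm_real]
  simp

theorem towC_root (N : Subgroup G) [N.Normal] (l : N →* ℂ) (y : G)
    (h : towAv N (towH R) y = 1) (h0 : towC R N l y ≠ 0) : ‖towC R N l y‖ = 1 := by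
  obtain ⟨m, hm, h1⟩ := tow_kron (towC_integral R N l y) h0 (by
    intro σ
    rw [← towC_S]
    apply towC_norm_le
    rw [towAv_S, h, map_one])
  exact Complex.norm_eq_one_of_pow_eq_one h1 hm.ne'

theorem towC_mul (N : Subgroup G) [N.Normal] (l : N →* ℂ) (y : G)
    (h : towAv N (towH R) y = 1) (h0 : towC R N l y ≠ 0) (m : N) (hm : towH R (y * m) ≠ 0) :
    towC R N l y * l m = 1 := by
  classical
  have hc := towC_root R N l y h h0
  set c := towC R N l y with hcdef
  have hl1 : ∀ m : N, l m⁻¹ = star (l m) := fun m => by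
    have h1 : l m * l m⁻¹ = 1 := by rw [← map_mul]; simp
    have h2 : l m * star (l m) = 1 := by
      have := Complex.mul_conj' (l m)
      rw [tow_norm_char] at this
      simpa using this
    have h3 : l m ≠ 0 := left_ne_zero_of_mul_eq_one h1
    exact mul_left_cancel₀ h3 (h1.trans h2.symm)
  have hcc : star c * c = 1 := by
    have := Complex.conj_mul' c
    rw [hc] at this
    simpa using this
  have hN : (Nat.card N : ℝ) ≠ 0 := by exact_mod_cast Nat.card_pos.ne'
  have hre : ∀ m : N, (c * l m).re ≤ 1 := fun m => by
    refine (Complex.re_le_norm _).trans ?_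
    rw [norm_mul, hc, tow_norm_char, one_mul]
  have hsum : ∑ m : N, ‖(R (y * m)).trace‖ ^ 2 * (1 - (c * l m).re) = 0 := by
    rw [towAv_real, towAv_eq] at h
    have h : (Nat.card N : ℝ)⁻¹ * ∑ m : N, ‖(R (y * m)).trace‖ ^ 2 = 1 := by exact_mod_cast h
    have h2 : (Nat.card N : ℂ)⁻¹ * ∑ m : N, towH R (y * m) * star (c * l m) = 1 := by
      have hcs : c = (Nat.card N : ℂ)⁻¹ * ∑ m : N, towH R (y * m) * l m⁻¹ := rfl
      refine Eq.trans ?_ ((congrArg (star c * ·) hcs).symm.trans hcc)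
      rw [mul_left_comm]
      congr 1
      rw [Finset.mul_sum]
      refine Finset.sum_congr rfl fun m _ => ?_
      rw [hl1, star_mul']; ring
    have h3 : (Nat.card N : ℝ)⁻¹ * ∑ m : N, ‖(R (y * m)).trace‖ ^ 2 * (c * l m).re = 1 := by
      have := congrArg Complex.re h2
      rw [show (Nat.card N : ℂ)⁻¹ = (((Nat.card N : ℝ)⁻¹ : ℝ) : ℂ) by push_cast; rfl,
        Complex.re_ofReal_mul, Complex.re_sum] at this
      simp only [towH_eq, Complex.re_ofReal_mul] at this
      simpa using this
    have h4 : ∑ m : N, ‖(R (y * m)).trace‖ ^ 2 = ∑ m : N, ‖(R (y * m)).trace‖ ^ 2 * (c * l m).re :=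
      mul_left_cancel₀ (inv_ne_zero hN) (h.trans h3.symm)
    simp only [mul_sub, mul_one, Finset.sum_sub_distrib]
    rw [← h4, sub_self]
  have hz := (Finset.sum_eq_zero_iff_of_nonneg (fun m _ =>
    mul_nonneg (sq_nonneg _) (sub_nonneg.2 (hre m)))).1 hsum m (Finset.mem_univ _)
  have hne : ‖(R (y * m)).trace‖ ^ 2 ≠ 0 := by
    intro h'
    rw [towH_eq, h'] at hm
    simp at hm
  have h5 : (c * l m).re = 1 := by
    rcases mul_eq_zero.1 hz with h' | h'
    · exact absurd h' hne
    · linarith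
  have h6 : ‖c * l m‖ = 1 := by rw [norm_mul, hc, tow_norm_char, one_mul]
  have h7 : (c * l m).im = 0 := by
    have := Complex.sq_norm (c * l m)
    rw [h6, Complex.normSq_apply, h5] at this
    nlinarith
  exact Complex.ext (by simp [h5]) (by simp [h7])

/-- The linear character of `N` attached to a character of its abelianization. -/
noncomputable def towL (N : Subgroup G) (ψ : AddChar (Additive (Abelianization N)) ℂ) : N →* ℂ where
  toFun m := ψ (Additive.ofMul (Abelianization.of m))
  map_one' := by simp
  map_mul' a b := by simp [AddChar.map_add_eq_mul]

theorem tow_mem_comm (N : Subgroup G) (m : N) :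
    Abelianization.of m = 1 ↔ (m : G) ∈ ⁅N, N⁆ := by
  rw [← MonoidHom.mem_ker, Abelianization.ker_of, ← Subgroup.map_subtype_commutator]
  simp

theorem tow_card_comm (N : Subgroup G) :
    Nat.card N = Nat.card (Abelianization N) * Nat.card (⁅N, N⁆ : Subgroup G) := by
  rw [← Subgroup.map_subtype_commutator, Subgroup.card_map_of_injective N.subtype_injective]
  exact Subgroup.card_eq_card_quotient_mul_card_subgroup _

theorem tow_fourier (N : Subgroup G) [Fintype (AddChar (Additive (Abelianization N)) ℂ)] (y : G) (a : N) :
    ∑ ψ : AddChar (Additive (Abelianization N)) ℂ, towC R N (towL N ψ) y * towL N ψ a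
      = towAv ⁅N, N⁆ (towH R) (y * a) := by
  classical
  have hfin : Fintype (Additive (Abelianization N)) := Fintype.ofFinite _
  simp only [towC, mul_assoc, Finset.sum_mul, ← Finset.mul_sum]
  rw [Finset.sum_comm]
  simp only [← map_mul, ← Finset.mul_sum]
  have h1 : ∀ m : N, ∑ ψ : AddChar (Additive (Abelianization N)) ℂ, towL N ψ (m⁻¹ * a) =
      if ((a⁻¹ * m : N) : G) ∈ ⁅N, N⁆ then (Nat.card (Abelianization N) : ℂ) else 0 := by
    intro m
    have := AddChar.sum_apply_eq_ite (Additive.ofMul (Abelianization.of (m⁻¹ * a)))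
    rw [← tow_mem_comm, show a⁻¹ * m = (m⁻¹ * a)⁻¹ by group, map_inv, inv_eq_one]
    rw [← Nat.card_eq_fintype_card] at this
    refine Eq.trans ?_ (this.trans ?_)
    · congr!
    · simp only [ofMul_eq_zero]
      rfl
  simp only [h1]
  rw [Fintype.sum_equiv (Equiv.mulLeft a⁻¹) _ (fun m : N => towH R (y * a * m) *
    if (m : G) ∈ ⁅N, N⁆ then (Nat.card (Abelianization N) : ℂ) else 0) (fun m => by
      simp [mul_assoc])]
  have h2 : ∑ m : N, (towH R (y * a * m) *
      if (m : G) ∈ ⁅N, N⁆ then (Nat.card (Abelianization N) : ℂ) else 0) =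
      ∑ m ∈ Finset.univ.filter (· ∈ ⁅N, N⁆), towH R (y * a * m) * (Nat.card (Abelianization N) : ℂ) := by
    rw [← Finset.sum_subtype (Finset.univ.filter (· ∈ N)) (by simp) (fun m : G => towH R (y * a * m) *
      if m ∈ ⁅N, N⁆ then (Nat.card (Abelianization N) : ℂ) else 0)]
    simp only [mul_ite, mul_zero]
    rw [← Finset.sum_filter, Finset.filter_filter]
    congr 1
    ext x
    simp only [Finset.mem_filter, Finset.mem_univ, true_and, and_iff_right_iff_imp]
    exact fun hx => Subgroup.commutator_le_self N hx
  rw [h2, ← Finset.sum_mul, towAv, tow_card_comm N]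
  have : (Nat.card (Abelianization N) : ℂ) ≠ 0 := by exact_mod_cast Nat.card_pos.ne'
  push_cast
  field_simp

theorem tow_step (N : Subgroup G) [N.Normal] (y : G) (h : towAv N (towH R) y = 1) (a : N) :
    ∃ k : ℕ, towAv ⁅N, N⁆ (fun x => ‖(R x).trace‖ ^ 2) (y * a) = (k : ℝ) := by
  classical
  have : Fintype (AddChar (Additive (Abelianization N)) ℂ) := Fintype.ofFinite _
  by_cases h0 : ∀ m ∈ ⁅N, N⁆, towH R (y * a * m) = 0
  · refine ⟨0, ?_⟩
    have : towAv ⁅N, N⁆ (towH R) (y * a) = 0 := by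
      unfold towAv
      rw [Finset.sum_eq_zero, mul_zero]
      intro m hm
      exact h0 m (by simpa using hm)
    rw [towAv_real] at this
    exact_mod_cast this
  · push Not at h0
    obtain ⟨m, hm, hm0⟩ := h0
    refine ⟨(Finset.univ.filter fun ψ => towC R N (towL N ψ) y ≠ 0).card, ?_⟩
    have h1 := tow_fourier R N y a
    have h2 : ∀ ψ, towC R N (towL N ψ) y * towL N ψ a =
        if towC R N (towL N ψ) y ≠ 0 then 1 else 0 := by
      intro ψ
      split_ifs with hψ
      · have hmN := Subgroup.commutator_le_self N hm
        have h3 := towC_mul R N (towL N ψ) y h hψ (a * ⟨m, hmN⟩) (by simpa [mul_assoc] using hm0)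
        have h4 : towL N ψ ⟨m, hmN⟩ = 1 := by
          have : Abelianization.of (⟨m, hmN⟩ : N) = 1 := (tow_mem_comm N _).2 hm
          simp [towL, this]
        rwa [map_mul, h4, mul_one] at h3
      · push Not at hψ
        rw [hψ, zero_mul]
    simp only [h2, Finset.sum_boole] at h1
    rw [towAv_real] at h1
    exact_mod_cast h1.symm
end

set_option linter.unusedSectionVars false
section
variable {G : Type*} [Group G] [Fintype G] {n : Type*} [Fintype n] [DecidableEq n]
    (R : G →* Matrix n n ℂ)

theorem towAv_nonneg (N : Subgroup G) (f : G → ℝ) (hf : ∀ x, 0 ≤ f x) (y : G) :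
    0 ≤ towAv N f y := by
  unfold towAv
  exact mul_nonneg (by positivity) (Finset.sum_nonneg fun _ _ => hf _)

theorem towAv_const (N : Subgroup G) (f : G → ℝ) (c : ℝ) (y : G) (hf : ∀ m ∈ N, f (y * m) = c) :
    towAv N f y = c := by
  classical
  rw [towAv_eq, Finset.sum_congr rfl (fun (m : N) _ => hf m m.2)]
  have : (Nat.card N : ℝ) ≠ 0 := by exact_mod_cast Nat.card_pos.ne'
  simp only [Finset.sum_const, Finset.card_univ, ← Nat.card_eq_fintype_card, nsmul_eq_mul]
  field_simp

theorem towAv_double (N M : Subgroup G) (hM : M ≤ N) (f : G → ℝ) (y : G) :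
    towAv N f y = towAv N (towAv M f) y := by
  classical
  have hc : (Nat.card M : ℝ) ≠ 0 := by exact_mod_cast Nat.card_pos.ne'
  rw [towAv_eq, towAv_eq]
  congr 1
  simp only [towAv_eq, ← Finset.mul_sum]
  rw [Finset.sum_comm]
  have : ∀ m : M, ∑ a : N, f (y * a * m) = ∑ a : N, f (y * a) := by
    intro m
    refine Fintype.sum_equiv (Equiv.mulRight ⟨m, hM m.2⟩) _ _ fun a => ?_
    simp [mul_assoc]
  simp only [this, Finset.sum_const, Finset.card_univ, ← Nat.card_eq_fintype_card, nsmul_eq_mul]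
  field_simp

/-- Indicator of the elements where the character is zero or a root of unity. -/
noncomputable def towW (x : G) : ℝ :=
  open scoped Classical in
  if (R x).trace = 0 ∨ ∃ m : ℕ, 0 < m ∧ (R x).trace ^ m = 1 then 1 else 0

theorem towW_nonneg (x : G) : 0 ≤ towW R x := by
  unfold towW; split_ifs <;> norm_num

theorem towW_unit (x : G) (h : towH R x = 1) : towW R x = 1 := by
  unfold towW
  rw [if_pos]
  right
  apply tow_kron
  · apply tow_trace_integral _ (orderOf x) (orderOf_pos x)
    rw [← map_pow, pow_succ, pow_orderOf_eq_one, one_mul]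
  · intro h0
    simp [towH, h0] at h
  · intro σ
    have h1 := towH_S R σ x
    rw [h, map_one, towH_eq, towS_trace] at h1
    have h2 : ‖σ (R x).trace‖ ^ 2 = 1 := by exact_mod_cast h1
    nlinarith [norm_nonneg (σ (R x).trace)]

theorem tow_main_aux (d : ℕ) (hd : derivedSeries G d = ⊥) (j i : ℕ) (hij : i + j = d) (y : G)
    (h : towAv (derivedSeries G i) (towH R) y = 1) :
    1 / 2 ≤ towAv (derivedSeries G i) (towW R) y := by
  classical
  induction j generalizing i y with
  | zero =>
    obtain rfl : i = d := by omega
    rw [hd] at h ⊢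
    have h1 : towH R y = 1 := by
      rw [towAv_eq] at h
      have hm : ∀ m : (⊥ : Subgroup G), towH R (y * m) = towH R y := fun m => by
        rw [Subgroup.mem_bot.1 m.2, mul_one]
      simpa only [hm, Finset.sum_const, Finset.card_univ, ← Nat.card_eq_fintype_card,
        Subgroup.card_bot, Nat.cast_one, inv_one, one_mul, one_smul] using h
    rw [towAv_const _ _ 1 y]
    · norm_num
    · intro m hm
      rw [Subgroup.mem_bot.1 hm, mul_one]
      exact towW_unit R y h1
  | succ j ih =>
    have hNn : (derivedSeries G i).Normal := derivedSeries_normal G i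
    have hle : derivedSeries G (i+1) ≤ derivedSeries G i := derivedSeries_antitone G (Nat.le_succ i)
    let F : G → ℝ := fun x => ‖(R x).trace‖ ^ 2
    have hF : towAv (derivedSeries G i) F y = 1 := by
      rw [towAv_real] at h; exact_mod_cast h
    have hpt : ∀ a : derivedSeries G i, 1 - towAv (derivedSeries G (i+1)) F (y * a) / 2 ≤
        towAv (derivedSeries G (i+1)) (towW R) (y * a) := by
      intro a
      obtain ⟨k, hk⟩ := tow_step R _ y h a
      rw [← derivedSeries_succ] at hk
      have h0 := towAv_nonneg (derivedSeries G (i+1)) _ (towW_nonneg R) (y * a)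
      change towAv (derivedSeries G (i+1)) F (y * a) = k at hk
      rcases (by omega : k = 0 ∨ k = 1 ∨ 2 ≤ k) with rfl | rfl | hk2
      · have h1 : ∀ m : derivedSeries G (i+1), F (y * a * m) = 0 := by
          rw [towAv_eq] at hk
          have hc : (Nat.card (derivedSeries G (i+1)) : ℝ)⁻¹ ≠ 0 :=
            inv_ne_zero (by exact_mod_cast Nat.card_pos.ne')
          have := (mul_eq_zero.1 (by simpa using hk)).resolve_left hc
          intro m
          exact (Finset.sum_eq_zero_iff_of_nonneg (fun _ _ => sq_nonneg _)).1 this m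
            (Finset.mem_univ _)
        rw [hk, towAv_const _ _ 1]
        · simp
        · intro m hm
          have h2 := h1 ⟨m, hm⟩
          simp only [F, ne_eq, OfNat.ofNat_ne_zero, not_false_eq_true, pow_eq_zero_iff, norm_eq_zero] at h2
          unfold towW
          rw [if_pos (Or.inl h2)]
      · have := ih (i+1) (by omega) (y * a) (by rw [towAv_real]; change ((towAv _ F _ : ℝ) : ℂ) = 1; rw [hk]; simp)
        rw [hk]; push_cast; linarith
      · rw [hk]
        have : (2:ℝ) ≤ k := by exact_mod_cast hk2
        linarith
    rw [towAv_double _ _ hle] at hF ⊢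
    have hc : (0:ℝ) < Nat.card (derivedSeries G i) := by exact_mod_cast Nat.card_pos
    rw [towAv_eq] at hF ⊢
    have hs := Finset.sum_le_sum fun a (_ : a ∈ (Finset.univ : Finset (derivedSeries G i))) => hpt a
    rw [Finset.sum_sub_distrib, ← Finset.sum_div] at hs
    simp only [Finset.sum_const, Finset.card_univ, ← Nat.card_eq_fintype_card, nsmul_eq_mul, mul_one] at hs
    rw [inv_mul_eq_div, div_eq_one_iff_eq hc.ne'] at hF
    rw [hF] at hs
    rw [inv_mul_eq_div, le_div_iff₀ hc]
    linarith
end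

theorem tow_solvable {G : Type*} [Group G] [Fintype G] (h : HasSylowTower G) : Group.IsSolvable G := by
  obtain ⟨k, p, N, hp, -, hmono, h0, hlast, hnorm, hidx⟩ := h
  have key : ∀ i : Fin (k+1), Group.IsSolvable (N i) := by
    intro i
    induction i using Fin.induction with
    | zero => rw [h0]; infer_instance
    | succ i ih =>
      have := hnorm i.castSucc
      let M := (N i.castSucc).subgroupOf (N i.succ)
      have : Fact (p i).Prime := ⟨hp i⟩
      have hq : IsPGroup (p i) (N i.succ ⧸ M) :=
        IsPGroup.of_card (n := (Fintype.card G).factorization (p i)) (hidx i)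
      have : Group.IsNilpotent (N i.succ ⧸ M) := hq.isNilpotent
      have : Group.IsSolvable (N i.succ ⧸ M) := inferInstance
      refine Group.isSolvable_of_ker_le_range (Subgroup.inclusion (hmono i.castSucc_le_succ))
        (QuotientGroup.mk' M) ?_
      rw [QuotientGroup.ker_mk']
      intro x hx
      exact ⟨⟨x, hx⟩, rfl⟩
  have := key (Fin.last k)
  rw [hlast] at this
  exact Group.isSolvable_of_surjective (f := (⊤ : Subgroup G).subtype) fun x => ⟨⟨x, trivial⟩, rfl⟩

/-- If a finite group `G` has a Sylow tower and `χ` is an irreducible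
complex character of `G`, then `χ(x)` is zero or a root of unity for at least `|G|/2`
elements `x ∈ G`. -/
theorem stmt11 {G : Type} [Group G] [Fintype G]
    (htower : HasSylowTower G)
    (V : FDRep ℂ G) (hV : Simple V) :
    Fintype.card G ≤
      2 * {x : G | V.character x = 0 ∨ ∃ m : ℕ, 0 < m ∧ V.character x ^ m = 1}.ncard := by
  classical
  obtain ⟨d, hd⟩ := (tow_solvable htower).solvable
  let b := Module.finBasis ℂ V
  let R : G →* Matrix (Fin (Module.finrank ℂ V)) (Fin (Module.finrank ℂ V)) ℂ :=
    (LinearMap.toMatrixAlgEquiv b).toAlgHom.toRingHom.toMonoidHom.comp V.ρ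
  have hR : ∀ x, (R x).trace = V.character x := by
    intro x
    exact (LinearMap.trace_eq_matrix_trace ℂ b (V.ρ x)).symm
  have hinv : Invertible (Fintype.card G : ℂ) := invertibleOfNonzero (by simp)
  have hinv' : Invertible (Nat.card G : ℂ) := invertibleOfNonzero (by simp)
  have horth := FDRep.char_orthonormal V V
  rw [if_pos ⟨Iso.refl V⟩] at horth
  have h1 : towAv (derivedSeries G 0) (towH R) 1 = 1 := by
    rw [derivedSeries_zero]
    simp only [towAv, towH, hR, Subgroup.mem_top, Finset.filter_true, one_mul]
    simpa using horth
  have h2 := tow_main_aux R d hd d 0 (by simp) 1 h1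
  rw [derivedSeries_zero] at h2
  simp only [towAv, Subgroup.card_top, towW, hR] at h2
  simp only [Subgroup.mem_top, Finset.filter_true, one_mul,
    Finset.sum_boole] at h2
  have hc : (0:ℝ) < Nat.card G := by exact_mod_cast Nat.card_pos
  rw [inv_mul_eq_div, le_div_iff₀ hc] at h2
  rw [Set.ncard_eq_toFinset_card', Set.toFinset_ofPred, ← Nat.card_eq_fintype_card]
  have h3 : (Nat.card G : ℝ) ≤ ((2 * (Finset.univ.filter fun x : G => V.character x = 0 ∨ ∃ m : ℕ, 0 < m ∧ V.character x ^ m = 1).card : ℕ) : ℝ) := by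
    push_cast; linarith
  exact_mod_cast h3
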